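/- arXiv:2410.15852 — 2 statements merged into one kernel-verified Lean document; each statement's English description precedes it below -/
import Mathlib

section
/- For every integer n ≥ 2, d3(n-1) equals the number of partitions of n in which no even part is repeated, the largest part is even, and the largest part minus 1 does not occur as a part (equivalently, partitions of the form (2j, k, ...) with no even part repeated and second largest part k ≤ 2j - 2). (The bijection adds 1 to the largest part.) -/
/-- No even part is repeated (all even parts are distinct). -/
def EvenDistinct {n : ℕ} (p : n.Partition) : Prop :=
  ∀ i, Even i → p.parts.count i ≤ 1

/-- No odd part is repeated (all odd parts are distinct). -/
def OddDistinct {n : ℕ} (p : n.Partition) : Prop :=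
  ∀ i, Odd i → p.parts.count i ≤ 1

/-- The largest part of a partition (0 for the empty partition of 0). -/
def maxPart {n : ℕ} (p : n.Partition) : ℕ := p.parts.sup

/-- Number of partitions of n with no even part repeated, largest part odd,
and the largest part appearing exactly once. -/
noncomputable def d3 (n : ℕ) : ℕ :=
  Nat.card {p : n.Partition // EvenDistinct p ∧ Odd (maxPart p) ∧
    p.parts.count (maxPart p) = 1}

lemma aux_sup_cons (m : ℕ) (t : Multiset ℕ) (h : ∀ x ∈ t, x < m) : (m ::ₘ t).sup = m := by
  rw [Multiset.sup_cons]
  exact sup_eq_left.2 (Multiset.sup_le.2 fun x hx => (h x hx).le)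

lemma aux_sup_mem (s : Multiset ℕ) (h : s ≠ 0) : s.sup ∈ s := by
  induction s using Multiset.induction_on with
  | empty => exact absurd rfl h
  | cons a s ih =>
    rw [Multiset.sup_cons]
    by_cases hs : s = 0
    · subst hs; simp
    · rcases le_total a s.sup with h1 | h1
      · rw [sup_eq_right.2 h1]; exact Multiset.mem_cons_of_mem (ih hs)
      · rw [sup_eq_left.2 h1]; exact Multiset.mem_cons_self a s

lemma aux_decomp (s : Multiset ℕ) (h : s ≠ 0) (hc : s.count s.sup ≤ 1) :
    s = s.sup ::ₘ s.erase s.sup ∧ ∀ x ∈ s.erase s.sup, x < s.sup := by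
  have hm := aux_sup_mem s h
  refine ⟨(Multiset.cons_erase hm).symm, fun x hx => ?_⟩
  refine lt_of_le_of_ne (Multiset.le_sup (Multiset.mem_of_mem_erase hx)) ?_
  rintro h2
  have h3 := Multiset.count_pos.2 hx
  rw [h2, Multiset.count_erase_self] at h3
  omega

/-- shape of both families: `c` is the shift -/
def AuxShape (c : ℕ) (s : Multiset ℕ) : Prop :=
  ∃ m t, s = (m + c) ::ₘ t ∧ Odd m ∧ (∀ x ∈ t, x < m) ∧ ∀ i, Even i → t.count i ≤ 1

lemma aux_A {n : ℕ} (p : n.Partition) :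
    (EvenDistinct p ∧ Odd (maxPart p) ∧ p.parts.count (maxPart p) = 1) ↔ AuxShape 0 p.parts := by
  unfold EvenDistinct maxPart
  constructor
  · rintro ⟨h1, h2, h3⟩
    have h0 : p.parts ≠ 0 := by
      intro h; rw [h] at h3; simp at h3
    obtain ⟨a, b⟩ := aux_decomp _ h0 h3.le
    exact ⟨_, _, a, h2, b, fun i hi =>
      (Multiset.count_le_of_le i (Multiset.erase_le _ _)).trans (h1 i hi)⟩
  · rintro ⟨m, t, h, hm, ht, he⟩
    rw [Nat.add_zero] at h
    rw [h, aux_sup_cons m t ht]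
    refine ⟨fun i hi => ?_, hm, ?_⟩
    · rw [Multiset.count_cons_of_ne]
      · exact he i hi
      · rintro rfl; exact Nat.not_even_iff_odd.2 hm hi
    · rw [Multiset.count_cons_self, Multiset.count_eq_zero_of_notMem]
      intro h; exact lt_irrefl _ (ht _ h)

lemma aux_B {n : ℕ} (p : n.Partition) :
    (EvenDistinct p ∧ p.parts ≠ 0 ∧ Even (maxPart p) ∧ maxPart p - 1 ∉ p.parts) ↔
      AuxShape 1 p.parts := by
  unfold EvenDistinct maxPart
  constructor
  · rintro ⟨h1, h0, h2, h3⟩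
    obtain ⟨a, b⟩ := aux_decomp _ h0 (h1 _ h2)
    have hpos := p.parts_pos (aux_sup_mem _ h0)
    refine ⟨p.parts.sup - 1, p.parts.erase p.parts.sup, ?_, ?_, ?_, fun i hi =>
      (Multiset.count_le_of_le i (Multiset.erase_le _ _)).trans (h1 i hi)⟩
    · rw [Nat.sub_add_cancel hpos]; exact a
    · exact Nat.Even.sub_odd hpos h2 odd_one
    · intro x hx
      have := b x hx
      have h4 : x ≠ p.parts.sup - 1 := by
        intro h; rw [← h] at h3; exact h3 (Multiset.mem_of_mem_erase hx)
      omega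
  · rintro ⟨m, t, h, hm, ht, he⟩
    have ht' : ∀ x ∈ t, x < m + 1 := fun x hx => (ht x hx).trans (Nat.lt_succ_self m)
    rw [h, aux_sup_cons _ t ht']
    refine ⟨fun i hi => ?_, by simp, hm.add_one, ?_⟩
    · by_cases hi' : i = m + 1
      · subst hi'
        rw [Multiset.count_cons_self, Multiset.count_eq_zero_of_notMem]
        intro h; exact lt_irrefl _ (ht' _ h)
      · rw [Multiset.count_cons_of_ne hi']; exact he i hi
    · rw [Nat.add_sub_cancel, Multiset.mem_cons]
      rintro (h | h)
      · omega
      · exact lt_irrefl _ (ht _ h)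

/-- add one to the largest part -/
def auxUp (s : Multiset ℕ) : Multiset ℕ := (s.sup + 1) ::ₘ s.erase s.sup
/-- subtract one from the largest part -/
def auxDown (s : Multiset ℕ) : Multiset ℕ := (s.sup - 1) ::ₘ s.erase s.sup

lemma auxUp_cons (m : ℕ) (t : Multiset ℕ) (h : ∀ x ∈ t, x < m) :
    auxUp (m ::ₘ t) = (m + 1) ::ₘ t := by
  unfold auxUp; rw [aux_sup_cons m t h, Multiset.erase_cons_head]

lemma auxDown_cons (m : ℕ) (t : Multiset ℕ) (h : ∀ x ∈ t, x < m) :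
    auxDown ((m + 1) ::ₘ t) = m ::ₘ t := by
  unfold auxDown
  rw [aux_sup_cons (m + 1) t fun x hx => (h x hx).trans (Nat.lt_succ_self m),
    Multiset.erase_cons_head, Nat.add_sub_cancel]

lemma auxUp_spec {s : Multiset ℕ} (h : AuxShape 0 s) :
    AuxShape 1 (auxUp s) ∧ (auxUp s).sum = s.sum + 1 ∧ auxDown (auxUp s) = s ∧
      ((∀ {i}, i ∈ s → 0 < i) → ∀ {i}, i ∈ auxUp s → 0 < i) := by
  obtain ⟨m, t, rfl, hm, ht, he⟩ := h
  rw [Nat.add_zero, auxUp_cons m t ht, auxDown_cons m t ht]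
  refine ⟨⟨m, t, rfl, hm, ht, he⟩, by simp; omega, rfl, fun h i hi => ?_⟩
  rcases Multiset.mem_cons.1 hi with h1 | h1
  · omega
  · exact h (Multiset.mem_cons_of_mem h1)

lemma auxDown_spec {s : Multiset ℕ} (h : AuxShape 1 s) :
    AuxShape 0 (auxDown s) ∧ (auxDown s).sum + 1 = s.sum ∧ auxUp (auxDown s) = s ∧
      ((∀ {i}, i ∈ s → 0 < i) → ∀ {i}, i ∈ auxDown s → 0 < i) := by
  obtain ⟨m, t, rfl, hm, ht, he⟩ := h
  rw [auxDown_cons m t ht, auxUp_cons m t ht]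
  refine ⟨⟨m, t, rfl, hm, ht, he⟩, by simp; omega, rfl, fun h i hi => ?_⟩
  rcases Multiset.mem_cons.1 hi with h1 | h1
  · rw [h1]; exact hm.pos
  · exact h (Multiset.mem_cons_of_mem h1)

/-- the bijection -/
def auxEquiv (k : ℕ) : {p : k.Partition // AuxShape 0 p.parts} ≃
    {p : (k + 1).Partition // AuxShape 1 p.parts} where
  toFun p := ⟨⟨auxUp p.1.parts, (auxUp_spec p.2).2.2.2 p.1.parts_pos, by
    rw [(auxUp_spec p.2).2.1, p.1.parts_sum]⟩, (auxUp_spec p.2).1⟩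
  invFun p := ⟨⟨auxDown p.1.parts, (auxDown_spec p.2).2.2.2 p.1.parts_pos, by
    have := (auxDown_spec p.2).2.1
    rw [p.1.parts_sum] at this
    omega⟩, (auxDown_spec p.2).1⟩
  left_inv p := Subtype.ext (Nat.Partition.ext (auxUp_spec p.2).2.2.1)
  right_inv p := Subtype.ext (Nat.Partition.ext (auxDown_spec p.2).2.2.1)

theorem d3_eq_card_largest_even_pred_not_mem : ∀ n : ℕ, 2 ≤ n →
    d3 (n - 1) =
      Nat.card {p : n.Partition // EvenDistinct p ∧ p.parts ≠ 0 ∧ Even (maxPart p) ∧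
        maxPart p - 1 ∉ p.parts} := by
  intro n hn
  obtain ⟨k, rfl⟩ : ∃ k, n = k + 1 := ⟨n - 1, by omega⟩
  rw [Nat.add_sub_cancel, d3]
  exact Nat.card_congr ((Equiv.subtypeEquivRight aux_A).trans
    ((auxEquiv k).trans (Equiv.subtypeEquivRight aux_B).symm))
end

section
/- For every integer n ≥ 4, o2(n-3) equals the number of partitions of n in which no odd part is repeated, the largest part is even, and the second largest part equals the largest part minus 1 (i.e., partitions of the form (2ℓ, 2ℓ-1, h, ...) with h ≤ 2ℓ - 2 and no odd part repeated). (The bijection adds 2 to one copy of the largest part and 1 to the other copy of the largest part.) -/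
/-- Number of partitions of n with no odd part repeated, largest part even,
and the largest part appearing at least twice. -/
noncomputable def o2 (n : ℕ) : ℕ :=
  Nat.card {p : n.Partition // OddDistinct p ∧ p.parts ≠ 0 ∧ Even (maxPart p) ∧
    2 ≤ p.parts.count (maxPart p)}


/-- Common parametrisation of both families. -/
def TT (k : ℕ) : Type := {x : ℕ × Multiset ℕ // 0 < x.1 ∧ Even x.1 ∧
  (∀ i ∈ x.2, 0 < i ∧ i ≤ x.1) ∧ (∀ i, Odd i → x.2.count i ≤ 1) ∧ x.2.sum + 2 * x.1 = k}

theorem sup_cons2 {a b : ℕ} {s : Multiset ℕ} (hb : b ≤ a) (hs : ∀ i ∈ s, i ≤ a) :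
    (a ::ₘ b ::ₘ s).sup = a := by
  have h : s.sup ≤ a := Multiset.sup_le.2 hs
  simp [hb, h]

theorem exA {k : ℕ} (x : TT k) : ∃ p : {p : k.Partition // OddDistinct p ∧ p.parts ≠ 0 ∧
    Even (maxPart p) ∧ 2 ≤ p.parts.count (maxPart p)},
    p.1.parts = x.1.1 ::ₘ x.1.1 ::ₘ x.1.2 := by
  obtain ⟨⟨m, s⟩, h0, he, hs, ho, hk⟩ := x
  replace hk : s.sum + 2 * m = k := hk
  have hsup : (m ::ₘ m ::ₘ s).sup = m := sup_cons2 le_rfl (fun i hi => (hs i hi).2)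
  refine ⟨⟨⟨m ::ₘ m ::ₘ s, ?_, ?_⟩, ?_, ?_, ?_, ?_⟩, rfl⟩
  · intro i hi
    simp only [Multiset.mem_cons] at hi
    rcases hi with rfl | rfl | hi
    · exact h0
    · exact h0
    · exact (hs i hi).1
  · simp only [Multiset.sum_cons]; omega
  · intro i hi
    have : i ≠ m := by rintro rfl; exact (Nat.not_even_iff_odd.2 hi) he
    simpa [Multiset.count_cons, this] using ho i hi
  · simp
  · simpa only [maxPart, hsup] using he
  · simp only [maxPart, hsup]; simp

theorem exB {n : ℕ} (hn : 4 ≤ n) (x : TT (n - 3)) : ∃ p : {p : n.Partition // OddDistinct p ∧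
    Even (maxPart p) ∧ p.parts.count (maxPart p) = 1 ∧ maxPart p - 1 ∈ p.parts},
    p.1.parts = (x.1.1 + 2) ::ₘ (x.1.1 + 1) ::ₘ x.1.2 := by
  obtain ⟨⟨m, s⟩, h0, he, hs, ho, hk⟩ := x
  replace hk : s.sum + 2 * m = n - 3 := hk
  have hsup : ((m+2) ::ₘ (m+1) ::ₘ s).sup = m+2 :=
    sup_cons2 (by omega) (fun i hi => by have := (hs i hi).2; omega)
  have c1 : s.count (m+1) = 0 := Multiset.count_eq_zero.2 fun h => by have := (hs _ h).2; omega
  have c2 : s.count (m+2) = 0 := Multiset.count_eq_zero.2 fun h => by have := (hs _ h).2; omega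
  refine ⟨⟨⟨(m+2) ::ₘ (m+1) ::ₘ s, ?_, ?_⟩, ?_, ?_, ?_, ?_⟩, rfl⟩
  · intro i hi
    simp only [Multiset.mem_cons] at hi
    rcases hi with rfl | rfl | hi
    · omega
    · omega
    · exact (hs i hi).1
  · simp only [Multiset.sum_cons]; omega
  · intro i hi
    have h2 : i ≠ m + 2 := by rintro rfl; grind
    by_cases h1 : i = m + 1
    · subst h1; simp [Multiset.count_cons, c1]
    · simpa [Multiset.count_cons, h1, h2] using ho i hi
  · simp only [maxPart, hsup]; grind
  · simp only [maxPart, hsup]; simp [Multiset.count_cons, c2]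
  · simp only [maxPart, hsup]; simp

theorem cardA (k : ℕ) : o2 k = Nat.card (TT k) := by
  symm
  choose f hf using @exA k
  refine Nat.card_eq_of_bijective f ⟨?_, ?_⟩
  · rintro x y h
    have h' : x.1.1 ::ₘ x.1.1 ::ₘ x.1.2 = y.1.1 ::ₘ y.1.1 ::ₘ y.1.2 := by
      rw [← hf, ← hf, h]
    have hx := sup_cons2 (le_refl x.1.1) (fun i hi => (x.2.2.2.1 i hi).2)
    have hy := sup_cons2 (le_refl y.1.1) (fun i hi => (y.2.2.2.1 i hi).2)
    have e : x.1.1 = y.1.1 := by rw [← hx, h', hy]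
    rw [e] at h'
    exact Subtype.ext (Prod.ext e (by simpa using h'))
  · rintro ⟨p, ho, hne, he, hc⟩
    obtain ⟨s, hs⟩ := Multiset.le_iff_exists_add.1 (Multiset.le_count_iff_replicate_le.1 hc)
    have hs' : p.parts = maxPart p ::ₘ maxPart p ::ₘ s := by
      rw [hs]; simp [Multiset.replicate_succ]
    have hmem : maxPart p ∈ p.parts := by rw [hs']; simp
    refine ⟨⟨(maxPart p, s), p.parts_pos hmem, he, ?_, ?_, ?_⟩, ?_⟩
    · intro i hi
      have : i ∈ p.parts := by rw [hs']; simp [hi]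
      exact ⟨p.parts_pos this, Multiset.le_sup this⟩
    · intro i hi
      refine le_trans (Multiset.count_le_of_le i ?_) (ho i hi)
      rw [hs]; exact Multiset.le_add_left _ _
    · have := p.parts_sum
      rw [hs'] at this
      simp only [Multiset.sum_cons] at this
      dsimp only; omega
    · apply Subtype.ext
      apply Nat.Partition.ext
      exact (hf _).trans hs'.symm

theorem cardB {n : ℕ} (hn : 4 ≤ n) : Nat.card {p : n.Partition // OddDistinct p ∧
    Even (maxPart p) ∧ p.parts.count (maxPart p) = 1 ∧ maxPart p - 1 ∈ p.parts}
      = Nat.card (TT (n - 3)) := by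
  symm
  choose f hf using @exB n hn
  refine Nat.card_eq_of_bijective f ⟨?_, ?_⟩
  · rintro x y h
    have h' : (x.1.1 + 2) ::ₘ (x.1.1 + 1) ::ₘ x.1.2 = (y.1.1 + 2) ::ₘ (y.1.1 + 1) ::ₘ y.1.2 := by
      rw [← hf, ← hf, h]
    have hx := sup_cons2 (show x.1.1 + 1 ≤ x.1.1 + 2 by omega)
      (fun i hi => (x.2.2.2.1 i hi).2.trans (by omega))
    have hy := sup_cons2 (show y.1.1 + 1 ≤ y.1.1 + 2 by omega)
      (fun i hi => (y.2.2.2.1 i hi).2.trans (by omega))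
    have e : x.1.1 = y.1.1 := by
      have : x.1.1 + 2 = y.1.1 + 2 := by rw [← hx, h', hy]
      omega
    rw [e] at h'
    exact Subtype.ext (Prod.ext e (by simpa using h'))
  · rintro ⟨p, ho, he, hc, hm⟩
    have hmem : maxPart p ∈ p.parts := Multiset.count_pos.1 (by omega)
    have hpos := p.parts_pos hmem
    obtain ⟨m, hM⟩ : ∃ m, maxPart p = m + 2 := ⟨maxPart p - 2, by grind⟩
    have hle : ∀ i ∈ p.parts, i ≤ m + 2 := fun i hi => hM ▸ Multiset.le_sup hi
    rw [hM] at he hc hm hmem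
    have hm1 : m + 1 ∈ p.parts := hm
    obtain ⟨t, ht⟩ := Multiset.exists_cons_of_mem hmem
    have hmt : m + 1 ∈ t := by
      rw [ht] at hm1; simpa using hm1
    obtain ⟨s, rfl⟩ := Multiset.exists_cons_of_mem hmt
    have hev : Even m := by grind
    have c2 : m + 2 ∉ s := by
      rw [ht] at hc
      simp [Multiset.count_cons] at hc
      exact hc
    have c1 : m + 1 ∉ s := by
      have := ho (m+1) (by grind)
      rw [ht] at this
      simp [Multiset.count_cons] at this
      exact this
    have hs : ∀ i ∈ s, 0 < i ∧ i ≤ m := by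
      intro i hi
      have h : i ∈ p.parts := by rw [ht]; simp [hi]
      have h1 := hle i h
      have h2 : i ≠ m + 2 := by rintro rfl; exact c2 hi
      have h3 : i ≠ m + 1 := by rintro rfl; exact c1 hi
      exact ⟨p.parts_pos h, by omega⟩
    have hsum := p.parts_sum
    rw [ht] at hsum
    simp only [Multiset.sum_cons] at hsum
    refine ⟨⟨(m, s), ?_, hev, hs, ?_, ?_⟩, ?_⟩
    · by_contra h0
      have h0 : m = 0 := by simpa using h0
      have : s = 0 := Multiset.eq_zero_of_forall_notMem fun i hi => by
        have := hs i hi; omega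
      subst this
      simp at hsum; omega
    · intro i hi
      refine le_trans (Multiset.count_le_of_le i ?_) (ho i hi)
      rw [ht]; exact (Multiset.le_cons_self _ _).trans (Multiset.le_cons_self _ _)
    · dsimp only; omega
    · apply Subtype.ext
      apply Nat.Partition.ext
      exact (hf _).trans ht.symm

theorem o2_eq_card_largest_even_second_pred : ∀ n : ℕ, 4 ≤ n →
    o2 (n - 3) =
      Nat.card {p : n.Partition // OddDistinct p ∧ Even (maxPart p) ∧
        p.parts.count (maxPart p) = 1 ∧ maxPart p - 1 ∈ p.parts} := by
  intro n hn
  rw [cardA, cardB hn]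
end
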